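/- Let g be a semisimple Lie algebra with sl2-triple (e,h,f) and grading g = ⊕ g_j by ad h eigenvalues. For E ∈ g_j with j ≥ 0, define the skew form ω on g_1 by ω(a,b) = (f | [a,b]). Then the centralizer of E in g_1 is coisotropic with respect to ω if and only if the map (ad E) ∘ (ad f)^{-1} ∘ (ad E) restricted to g_{-j-1} is zero, where (ad f)^{-1} is a chosen right inverse of ad f on the relevant graded components. -/

import Mathlib

/-!
By invariance, `ω(φ[E,y], z) = -(y | [E,z])` for `y ∈ g_{-j-1}` and `z ∈ g_1`. Since `g_{-j-1}`
and `g_{j+1}` are in duality, the `ω`-orthogonal of the centralizer of `E` in `g_1` is therefore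
exactly `φ[E, g_{-j-1}]`, and coisotropy says that `E` centralizes this space.

The duality requires `ad h` to be diagonalizable. Write `H`, `X`, `Y` for `ad h`, `ad e`, `ad f`;
the operators `X` and `Y` are nilpotent. If `X v = 0`, then
`X ^ N (Y ^ N v) = N! H (H - 1) ⋯ (H - (N - 1)) v`, so `H` is diagonalizable with eigenvalues in
`ℕ` on `ker X`. The Casimir operator acts by `i (i + 2)` on highest weight vectors of weight `i`,
hence the highest weight vectors in one of its generalized eigenspaces all have the same weight
`i`. On this space, `X ^ K v = 0` forces `(H - i) (H - (i - 2)) ⋯ (H - (i - 2 (K - 1))) v = 0`, and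
so `H` is killed by a polynomial with simple roots.
-/

open Polynomial

section Semisimple

variable {R M : Type*} [CommRing R] [AddCommGroup M] [Module R M]

lemma isCompl_ker_range_of_isSemisimple {T : Module.End R M} (hT : T.IsSemisimple) :
    IsCompl (LinearMap.ker T) (LinearMap.range T) := by
  rw [Module.End.isSemisimple_iff] at hT
  obtain ⟨Q, hTQ, hQ⟩ := hT (LinearMap.ker T) fun v hv ↦ by simp_all
  obtain ⟨P, hTP, hP⟩ := hT (LinearMap.range T) fun v _ ↦ ⟨v, rfl⟩
  constructor
  · refine hQ.disjoint.mono_right ?_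
    rintro _ ⟨v, rfl⟩
    obtain ⟨a, ha, q, hq, rfl⟩ : ∃ a ∈ LinearMap.ker T, ∃ q ∈ Q, a + q = v :=
      Submodule.mem_sup.mp (hQ.sup_eq_top ▸ Submodule.mem_top)
    rw [map_add, LinearMap.mem_ker.mp ha, zero_add]
    exact hTQ hq
  · refine hP.symm.codisjoint.mono_left fun v hv ↦ ?_
    exact Submodule.disjoint_def.mp hP.disjoint _ ⟨v, rfl⟩ (hTP hv)

end Semisimple

section SkewAdjoint

variable {F V : Type*} [Field F] [AddCommGroup V] [Module F V] [FiniteDimensional F V]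

lemma exists_mem_eigenspace_neg_forall_apply_eq {B : LinearMap.BilinForm F V} (hB : B.Nondegenerate)
    {D : Module.End F V} (hD : ∀ a b, B (D a) b = -B a (D b)) (hss : D.IsSemisimple) (c : F)
    (L : Module.Dual F V) :
    ∃ y ∈ D.eigenspace (-c), ∀ w ∈ D.eigenspace c, B y w = L w := by
  let T : Module.End F V := D - algebraMap F _ c
  have hcompl : IsCompl (D.eigenspace c) (LinearMap.range T) := by
    rw [Module.End.eigenspace_def]
    exact isCompl_ker_range_of_isSemisimple (Module.End.isSemisimple_sub_algebraMap_iff.mpr hss)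
  let L₀ : Module.Dual F V := LinearMap.ofIsCompl hcompl (L ∘ₗ (D.eigenspace c).subtype) 0
  have hL₀ (u : V) : L₀ (D u - c • u) = 0 :=
    LinearMap.ofIsCompl_apply_right hcompl ⟨D u - c • u, u, by simp [T]⟩
  have hrep (u : V) : B ((B.toDual hB).symm L₀) u = L₀ u :=
    LinearMap.BilinForm.apply_toDual_symm_apply (hB := hB) (f := L₀) u
  refine ⟨(B.toDual hB).symm L₀, Module.End.mem_eigenspace_iff.mpr ?_, fun w hw ↦ ?_⟩
  · refine (B.toDual hB).injective (LinearMap.ext fun u ↦ ?_)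
    have hu := hL₀ u
    simp only [map_sub, map_smul, smul_eq_mul] at hu
    simp only [LinearMap.BilinForm.toDual_def, hD, map_smul, LinearMap.smul_apply, smul_eq_mul,
      hrep]
    linear_combination -hu
  · rw [hrep]
    exact LinearMap.ofIsCompl_apply_left hcompl ⟨w, hw⟩

end SkewAdjoint

section LieEigenvector

variable {R A : Type*} [CommRing R] [Ring A] [Algebra R A]

lemma lie_mul_eq (a b c : A) : ⁅a, b * c⁆ = ⁅a, b⁆ * c + b * ⁅a, c⁆ := by
  simp only [Ring.lie_def]
  noncomm_ring

lemma lie_pow_eq_smul {H X : A} {c : R} (hHX : ⁅H, X⁆ = c • X) (k : ℕ) :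
    ⁅H, X ^ k⁆ = (k * c) • X ^ k := by
  induction k with
  | zero => simp [Ring.lie_def]
  | succ k ih =>
    rw [pow_succ, lie_mul_eq, ih, hHX, smul_mul_assoc, mul_smul_comm]
    push_cast
    module

attribute [local instance] LieRing.ofAssociativeRing

lemma isNilpotent_of_lie_eq_smul {F : Type*} [Field F] [CharZero F] [Algebra F A]
    [FiniteDimensional F A] {H X : A} {c : F} (hc : c ≠ 0) (hHX : ⁅H, X⁆ = c • X) :
    IsNilpotent X := by
  by_contra hX
  have heig (k : ℕ) : (LieAlgebra.ad F A H).HasEigenvalue (k * c) :=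
    Module.End.hasEigenvalue_of_hasEigenvector (x := X ^ k)
      ⟨Module.End.mem_eigenspace_iff.mpr (lie_pow_eq_smul hHX k), fun h0 ↦ hX ⟨k, h0⟩⟩
  refine Set.infinite_of_injective_forall_mem (f := fun k : ℕ ↦ (k * c : F)) (fun a b hab ↦ ?_)
    heig (Module.End.finite_hasEigenvalue _)
  simpa [hc] using hab

end LieEigenvector

section Sl2

variable {R A V : Type*} [CommRing R] [Ring A] [Algebra R A] [AddCommGroup V] [Module R V]

/-- The Casimir element `H² + 2H + 4YX` of an `sl₂`-triple, normalized so that it acts by `i(i + 2)`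
on highest weight vectors of weight `i`. -/
def sl2Casimir (H X Y : A) : A := H * H + 2 * H + 4 * (Y * X)

lemma commute_sl2Casimir_raise {H X Y : A} (hHX : ⁅H, X⁆ = (2 : R) • X) (hXY : ⁅X, Y⁆ = H) :
    Commute (sl2Casimir H X Y) X := by
  have hHX' : H * X - X * H = 2 * X := by
    rw [← Ring.lie_def, hHX, Algebra.smul_def, map_ofNat]
  rw [commute_iff_lie_eq]
  have h : ⁅sl2Casimir H X Y, X⁆ =
      H * (H * X - X * H) + (H * X - X * H) * H + 2 * (H * X - X * H) - 4 * (⁅X, Y⁆ * X) := by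
    simp only [sl2Casimir, Ring.lie_def]
    noncomm_ring
  calc
    _ = 2 * (2 * X - H * X + X * H) := by rw [h, hXY, hHX']; noncomm_ring
    _ = 0 := by rw [← hHX']; noncomm_ring

lemma commute_sl2Casimir_weight {H X Y : A} (hHX : ⁅H, X⁆ = (2 : R) • X)
    (hHY : ⁅H, Y⁆ = (-2 : R) • Y) : Commute (sl2Casimir H X Y) H := by
  have hYX : Commute (Y * X) H := by
    rw [Commute.symm_iff, commute_iff_lie_eq, lie_mul_eq, hHX, hHY, smul_mul_assoc, mul_smul_comm]
    module
  exact (((Commute.refl H).mul_left (.refl H)).add_left ((Commute.ofNat_left _ _).mul_left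
    (.refl H))).add_left ((Commute.ofNat_left _ _).mul_left hYX)

lemma lie_raise_pow_succ_lower {H X Y : A} (hHY : ⁅H, Y⁆ = (-2 : R) • Y) (hXY : ⁅X, Y⁆ = H)
    (m : ℕ) : ⁅X, Y ^ (m + 1)⁆ = (m + 1 : R) • (Y ^ m * (H - algebraMap R A m)) := by
  have hHY' : H * Y = Y * H + (-2 : R) • Y := by
    rw [← hHY, Ring.lie_def, add_sub_cancel]
  induction m with
  | zero => simp [hXY]
  | succ m ih =>
    rw [pow_succ, lie_mul_eq, ih, hXY]
    simp only [Algebra.algebraMap_eq_smul_one, smul_mul_assoc, mul_assoc, sub_mul, mul_sub,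
      hHY', mul_add, mul_smul_comm, pow_succ, mul_one]
    push_cast
    module

lemma ker_mem_invtSubmodule_of_lie_eq_smul {H X : Module.End R V} {c : R} (hHX : ⁅H, X⁆ = c • X) :
    LinearMap.ker X ∈ H.invtSubmodule := fun v (hv : X v = 0) ↦ by
  simpa [Ring.lie_def, hv] using congr($hHX v)

lemma sl2Casimir_apply_of_highestWeight {H X Y : Module.End R V} {i : R} {v : V} (hXv : X v = 0)
    (hHv : H v = i • v) : sl2Casimir H X Y v = (i * (i + 2)) • v := by
  simp only [sl2Casimir, LinearMap.add_apply, Module.End.mul_apply, hHv, map_smul,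
    Module.End.ofNat_apply, hXv, map_zero, add_zero]
  module

lemma raise_pow_lower_pow_apply {H X Y : Module.End R V} (hHX : ⁅H, X⁆ = (2 : R) • X)
    (hHY : ⁅H, Y⁆ = (-2 : R) • Y) (hXY : ⁅X, Y⁆ = H) (m : ℕ) {v : V} (hv : X v = 0) :
    (X ^ m) ((Y ^ m) v) =
      (m.factorial : R) • aeval H (∏ k ∈ Finset.range m, (Polynomial.X - C (k : R))) v := by
  induction m generalizing v with
  | zero => simp
  | succ m ih =>
    have hstep : X ((Y ^ (m + 1)) v) = (m + 1 : R) • (Y ^ m) ((H - algebraMap R _ m) v) := by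
      have := congr($(lie_raise_pow_succ_lower hHY hXY m) v)
      simpa [Ring.lie_def, hv] using this
    have hXHv : X ((H - algebraMap R _ m) v) = 0 := by
      have hHv : X (H v) = 0 := ker_mem_invtSubmodule_of_lie_eq_smul hHX hv
      simp [hHv, hv]
    rw [pow_succ X, Module.End.mul_apply, hstep, map_smul, ih hXHv, Finset.prod_range_succ,
      Nat.factorial_succ]
    simp [smul_smul]

lemma aeval_X_sub_C_apply (T : Module.End R V) (a : R) (v : V) :
    aeval T (X - C a) v = T v - a • v := by
  simp [Module.algebraMap_end_apply]

lemma eq_zero_of_aeval_prod_X_sub_C_apply_eq_zero {ι : Type*} {H : Module.End R V}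
    {K : Submodule R V} (hK : K ∈ H.invtSubmodule) {s : Finset ι} {a : ι → R}
    (hs : ∀ i ∈ s, ∀ v ∈ K, H v = a i • v → v = 0) {v : V} (hv : v ∈ K)
    (h0 : aeval H (∏ i ∈ s, (X - C (a i))) v = 0) : v = 0 := by
  classical
  induction s using Finset.induction_on generalizing v with
  | empty => simpa using h0
  | insert i s hi ih =>
    rw [Finset.prod_insert hi, mul_comm, map_mul, Module.End.mul_apply,
      aeval_X_sub_C_apply] at h0
    have hHv : H v - a i • v = 0 := ih (fun j hj ↦ hs j (Finset.mem_insert_of_mem hj))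
      (K.sub_mem (hK hv) (K.smul_mem (a i) hv)) h0
    exact hs i (Finset.mem_insert_self i s) v hv (sub_eq_zero.mp hHv)

lemma aeval_prod_apply_eq_zero_of_raise_pow_apply_eq_zero {H X : Module.End R V}
    (hHX : ⁅H, X⁆ = (2 : R) • X) {W : Submodule R V} (hWH : W ∈ H.invtSubmodule)
    (hWX : W ∈ X.invtSubmodule) {c : R} (hc : ∀ v ∈ W, X v = 0 → H v = c • v) {K : ℕ} {v : V}
    (hv : v ∈ W) (hXv : (X ^ K) v = 0) :
    aeval H (∏ k ∈ Finset.range K, (Polynomial.X - C (c - 2 * k : R))) v = 0 := by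
  induction K generalizing v with
  | zero => simpa using hXv
  | succ K ih =>
    have htop : H ((X ^ K) v) = c • (X ^ K) v := by
      refine hc _ ?_ (by rwa [pow_succ', Module.End.mul_apply] at hXv)
      rw [Module.End.pow_apply]
      exact Set.MapsTo.iterate hWX K hv
    have hlie : H ((X ^ K) v) - (X ^ K) (H v) = (K * 2 : R) • (X ^ K) v := by
      simpa [Ring.lie_def] using congr($(lie_pow_eq_smul hHX K) v)
    rw [Finset.prod_range_succ, map_mul, Module.End.mul_apply, aeval_X_sub_C_apply]
    refine ih (W.sub_mem (hWH hv) (W.smul_mem _ hv)) ?_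
    rw [htop] at hlie
    have hpow : (X ^ K) (H v) = (c - 2 * K) • (X ^ K) v := by
      rw [← sub_sub_cancel (c • (X ^ K) v) ((X ^ K) (H v)), hlie]
      module
    rw [map_sub, map_smul, hpow, sub_self]

lemma prod_range_X_sub_C_dvd_prod_Icc {i N : ℕ} (hiN : i ≤ N) (K : ℕ) :
    ∏ k ∈ Finset.range K, (X - C (i - 2 * k : R)) ∣
      ∏ n ∈ Finset.Icc (-(2 * K) : ℤ) N, (X - C (n : R)) := by
  have hinj : Function.Injective fun k : ℕ ↦ (i - 2 * k : ℤ) := fun a b hab ↦ by simpa using hab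
  have himage : (Finset.range K).image (fun k : ℕ ↦ (i - 2 * k : ℤ)) ⊆
      Finset.Icc (-(2 * K) : ℤ) N := fun n hn ↦ by
    obtain ⟨k, hk, rfl⟩ := Finset.mem_image.mp hn
    rw [Finset.mem_range] at hk
    rw [Finset.mem_Icc]
    omega
  convert Finset.prod_dvd_prod_of_subset _ _ (fun n : ℤ ↦ X - C (n : R)) himage using 1
  rw [Finset.prod_image hinj.injOn]
  push_cast
  rfl

variable {F : Type*} [Field F] [CharZero F] [Module F V]

lemma exists_le_forall_mul_add_two_eq_imp_eq (N : ℕ) (μ : F) :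
    ∃ i ≤ N, ∀ k < N, (k * (k + 2) : F) = μ → k = i := by
  by_cases h : ∃ i < N, (i * (i + 2) : F) = μ
  · obtain ⟨i, hi, rfl⟩ := h
    refine ⟨i, hi.le, fun k _ hk ↦ ?_⟩
    have hk' : k * (k + 2) = i * (i + 2) := by exact_mod_cast hk
    nlinarith
  · exact ⟨0, N.zero_le, fun k hk hkμ ↦ (h ⟨k, hk, hkμ⟩).elim⟩

lemma exists_le_forall_highestWeight_apply_eq_smul {H X Y : Module.End F V}
    (hHX : ⁅H, X⁆ = (2 : F) • X) (hHY : ⁅H, Y⁆ = (-2 : F) • Y) (hXY : ⁅X, Y⁆ = H) {N : ℕ}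
    (hN : Y ^ N = 0) (μ : F) :
    ∃ i ≤ N, ∀ v ∈ (sl2Casimir H X Y).maxGenEigenspace μ, X v = 0 → H v = (i : F) • v := by
  obtain ⟨i, hiN, hi⟩ := exists_le_forall_mul_add_two_eq_imp_eq N μ
  refine ⟨i, hiN, fun v hvμ hXv ↦ sub_eq_zero.mp ?_⟩
  let K := (sl2Casimir H X Y).maxGenEigenspace μ ⊓ LinearMap.ker X
  have hv : v ∈ K := ⟨hvμ, hXv⟩
  have hK : K ∈ H.invtSubmodule := fun u ⟨huμ, hXu⟩ ↦
    ⟨Module.End.mapsTo_maxGenEigenspace_of_comm (commute_sl2Casimir_weight hHX hHY) μ huμ,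
      ker_mem_invtSubmodule_of_lie_eq_smul hHX hXu⟩
  have heig (k : ℕ) (hk : k ∈ (Finset.range N).erase i) (u : V) (hu : u ∈ K)
      (hHu : H u = (k : F) • u) : u = 0 := by
    have hCu : u ∈ (sl2Casimir H X Y).eigenspace (k * (k + 2)) :=
      Module.End.mem_eigenspace_iff.mpr (sl2Casimir_apply_of_highestWeight hu.2 hHu)
    by_contra hu0
    refine Finset.ne_of_mem_erase hk
      (hi k (Finset.mem_range.mp (Finset.mem_of_mem_erase hk)) ?_)
    by_contra hkμ
    exact hu0 (Submodule.disjoint_def.mp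
      ((sl2Casimir H X Y).disjoint_genEigenspace hkμ 1 ⊤) u hCu hu.1)
  refine eq_zero_of_aeval_prod_X_sub_C_apply_eq_zero hK heig
    (K.sub_mem (hK hv) (K.smul_mem _ hv)) ?_
  have hprod : aeval H (∏ k ∈ Finset.range N, (Polynomial.X - C (k : F))) v = 0 := by
    have hpow := raise_pow_lower_pow_apply hHX hHY hXY N hXv
    rw [hN, LinearMap.zero_apply, map_zero] at hpow
    exact (smul_eq_zero.mp hpow.symm).resolve_left (by exact_mod_cast N.factorial_ne_zero)
  rw [← aeval_X_sub_C_apply, ← Module.End.mul_apply, ← map_mul]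
  by_cases hiN' : i ∈ Finset.range N
  · rwa [Finset.prod_erase_mul _ _ hiN']
  · rw [Finset.erase_eq_of_notMem hiN', mul_comm, map_mul, Module.End.mul_apply, hprod, map_zero]

theorem isSemisimple_of_sl2_relations [IsAlgClosed F] [FiniteDimensional F V]
    {H X Y : Module.End F V} (hHX : ⁅H, X⁆ = (2 : F) • X) (hHY : ⁅H, Y⁆ = (-2 : F) • Y)
    (hXY : ⁅X, Y⁆ = H) : H.IsSemisimple := by
  obtain ⟨K, hK⟩ : IsNilpotent X := isNilpotent_of_lie_eq_smul two_ne_zero hHX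
  obtain ⟨N, hN⟩ : IsNilpotent Y := isNilpotent_of_lie_eq_smul (by norm_num) hHY
  let p : F[X] := ∏ n ∈ Finset.Icc (-(2 * K) : ℤ) N, (Polynomial.X - C (n : F))
  have hp : Squarefree p := Separable.squarefree <|
    separable_prod_X_sub_C_iff'.mpr fun _ _ _ _ h ↦ Int.cast_injective h
  refine Module.End.isSemisimple_of_squarefree_aeval_eq_zero hp (LinearMap.ker_eq_top.mp ?_)
  rw [eq_top_iff, ← (sl2Casimir H X Y).iSup_maxGenEigenspace_eq_top, iSup_le_iff]
  intro μ v hv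
  obtain ⟨i, hiN, hi⟩ := exists_le_forall_highestWeight_apply_eq_smul hHX hHY hXY hN μ
  have hCH := commute_sl2Casimir_weight hHX hHY
  have hCX := commute_sl2Casimir_raise hHX hXY
  have hv0 := aeval_prod_apply_eq_zero_of_raise_pow_apply_eq_zero hHX
    (Module.End.mapsTo_maxGenEigenspace_of_comm hCH μ)
    (Module.End.mapsTo_maxGenEigenspace_of_comm hCX μ) hi hv congr($hK v)
  obtain ⟨q, hq⟩ : _ ∣ p := prod_range_X_sub_C_dvd_prod_Icc hiN K
  rw [LinearMap.mem_ker, hq, mul_comm, map_mul, Module.End.mul_apply, hv0, map_zero]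

end Sl2

section SemisimpleAd

variable {F g : Type*} [Field F] [IsAlgClosed F] [CharZero F] [LieRing g] [LieAlgebra F g]
  [FiniteDimensional F g]

attribute [local instance] LieRing.ofAssociativeRing

theorem isSemisimple_ad_of_sl2_relations {e h f : g} (hhe : ⁅h, e⁆ = 2 • e)
    (hhf : ⁅h, f⁆ = -(2 • f)) (hef : ⁅e, f⁆ = h) :
    (LieAlgebra.ad F g h).IsSemisimple := by
  refine isSemisimple_of_sl2_relations (X := LieAlgebra.ad F g e) (Y := LieAlgebra.ad F g f)
    ?_ ?_ ?_
  · rw [← LieHom.map_lie, hhe, map_nsmul, ofNat_smul_eq_nsmul F]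
  · rw [← LieHom.map_lie, hhf, map_neg, map_nsmul, neg_smul, ofNat_smul_eq_nsmul F]
  · rw [← LieHom.map_lie, hef]

end SemisimpleAd

section CentralizerOrthogonal

variable {F g : Type*} [Field F] [LieRing g] [LieAlgebra F g]

/-- The graded piece `g_c` of the grading of `g` by `ad h`, with `c` a scalar rather than an
integer so that it makes sense over any field. -/
abbrev adEigenspace (h : g) (c : F) : Submodule F g := (LieAlgebra.ad F g h).eigenspace c

lemma lie_mem_adEigenspace {h x y : g} {a b c : F} (hx : x ∈ adEigenspace h a)
    (hy : y ∈ adEigenspace h b) (habc : a + b = c) : ⁅x, y⁆ ∈ adEigenspace h c := by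
  subst habc
  rw [Module.End.mem_eigenspace_iff, LieAlgebra.ad_apply] at *
  rw [leibniz_lie, hx, hy, smul_lie, lie_smul, add_smul]

variable {B : LinearMap.BilinForm F g}

lemma apply_lie_eq_neg_apply_lie (hB_inv : ∀ a b c : g, B ⁅a, b⁆ c = B a ⁅b, c⁆) (a b c : g) :
    B ⁅a, b⁆ c = -B b ⁅a, c⁆ := by
  rw [← lie_skew, map_neg, LinearMap.neg_apply, hB_inv]

lemma apply_lie_eq_neg_of_lie_eq_lie (hB_inv : ∀ a b c : g, B ⁅a, b⁆ c = B a ⁅b, c⁆)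
    {f E x y : g} (hx : ⁅f, x⁆ = ⁅E, y⁆) (z : g) : B f ⁅x, z⁆ = -B y ⁅E, z⁆ := by
  rw [← hB_inv, hx, apply_lie_eq_neg_apply_lie hB_inv]

lemma exists_forall_apply_lie_eq [FiniteDimensional F g] (hB_nondeg : B.Nondegenerate)
    (hB_inv : ∀ a b c : g, B ⁅a, b⁆ c = B a ⁅b, c⁆) {h : g}
    (hss : (LieAlgebra.ad F g h).IsSemisimple) {a b : F} {E : g} (hE : E ∈ adEigenspace h a)
    {L : Module.Dual F g}
    (hL : ∀ z ∈ adEigenspace h b, ⁅E, z⁆ = 0 → L z = 0) :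
    ∃ y ∈ adEigenspace h (-(a + b)), ∀ z ∈ adEigenspace h b, B y ⁅E, z⁆ = L z := by
  let T : adEigenspace h b →ₗ[F] g := LieAlgebra.ad F g E ∘ₗ Submodule.subtype _
  obtain ⟨L', hL'⟩ : L ∘ₗ Submodule.subtype _ ∈ LinearMap.range T.dualMap := by
    rw [LinearMap.range_dualMap_eq_dualAnnihilator_ker, Submodule.mem_dualAnnihilator]
    exact fun z hz ↦ hL z z.2 hz
  obtain ⟨y, hy, hyL'⟩ := exists_mem_eigenspace_neg_forall_apply_eq hB_nondeg
    (apply_lie_eq_neg_apply_lie hB_inv h) hss (a + b) L'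
  refine ⟨y, hy, fun z hz ↦ ?_⟩
  rw [hyL' _ (lie_mem_adEigenspace hE hz rfl)]
  exact congr($hL' ⟨z, hz⟩)

theorem forall_apply_lie_eq_zero_iff_exists [FiniteDimensional F g] (hB_nondeg : B.Nondegenerate)
    (hB_inv : ∀ a b c : g, B ⁅a, b⁆ c = B a ⁅b, c⁆) {h f : g}
    (hss : (LieAlgebra.ad F g h).IsSemisimple) {b c : F} {E : g} (hE : E ∈ adEigenspace h c)
    (hω_nondeg : ∀ x ∈ adEigenspace h b, (∀ y ∈ adEigenspace h b, B f ⁅x, y⁆ = 0) → x = 0)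
    {φ : g → g} (hφ : ∀ y ∈ adEigenspace h (-b), φ y ∈ adEigenspace h b ∧ ⁅f, φ y⁆ = y)
    {x : g} (hx : x ∈ adEigenspace h b) :
    (∀ z ∈ adEigenspace h b, ⁅E, z⁆ = 0 → B f ⁅x, z⁆ = 0) ↔
      ∃ y ∈ adEigenspace h (-c - b), φ ⁅E, y⁆ = x := by
  have hEy {y : g} (hy : y ∈ adEigenspace h (-c - b)) : ⁅E, y⁆ ∈ adEigenspace h (-b) :=
    lie_mem_adEigenspace hE hy (by ring)
  constructor
  · intro horth
    obtain ⟨y, hy, hyx⟩ := exists_forall_apply_lie_eq hB_nondeg hB_inv hss hE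
      (L := -B ⁅f, x⁆) fun z hz hEz ↦ by
        rw [LinearMap.neg_apply, hB_inv, horth z hz hEz, neg_zero]
    rw [neg_add'] at hy
    obtain ⟨hφy, hfφy⟩ := hφ _ (hEy hy)
    refine ⟨y, hy, (sub_eq_zero.mp (hω_nondeg _ (sub_mem hx hφy) fun z hz ↦ ?_)).symm⟩
    rw [sub_lie, map_sub, apply_lie_eq_neg_of_lie_eq_lie hB_inv hfφy, hyx z hz,
      LinearMap.neg_apply, hB_inv, neg_neg, sub_self]
  · rintro ⟨y, hy, rfl⟩ z - hEz
    rw [apply_lie_eq_neg_of_lie_eq_lie hB_inv (hφ _ (hEy hy)).2, hEz, map_zero, neg_zero]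

theorem coisotropic_iff_adE_adfinv_adE_eq_zero_general [FiniteDimensional F g]
    (hB_nondeg : B.Nondegenerate) (hB_inv : ∀ a b c : g, B ⁅a, b⁆ c = B a ⁅b, c⁆) {h f : g}
    (hss : (LieAlgebra.ad F g h).IsSemisimple) {b c : F} {E : g} (hE : E ∈ adEigenspace h c)
    (hω_nondeg : ∀ x ∈ adEigenspace h b, (∀ y ∈ adEigenspace h b, B f ⁅x, y⁆ = 0) → x = 0)
    {φ : g → g} (hφ : ∀ y ∈ adEigenspace h (-b), φ y ∈ adEigenspace h b ∧ ⁅f, φ y⁆ = y) :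
    (∀ x ∈ adEigenspace h b,
      (∀ z ∈ adEigenspace h b, ⁅E, z⁆ = 0 → B f ⁅x, z⁆ = 0) → ⁅E, x⁆ = 0) ↔
      ∀ y ∈ adEigenspace h (-c - b), ⁅E, φ ⁅E, y⁆⁆ = 0 := by
  have horth (x : g) (hx : x ∈ adEigenspace h b) :=
    forall_apply_lie_eq_zero_iff_exists hB_nondeg hB_inv hss hE hω_nondeg hφ hx
  constructor
  · intro hco y hy
    have hφy := (hφ _ (lie_mem_adEigenspace hE hy (by ring))).1
    exact hco _ hφy ((horth _ hφy).mpr ⟨y, hy, rfl⟩)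
  · intro hzero x hx hx'
    obtain ⟨y, hy, rfl⟩ := (horth x hx).mp hx'
    exact hzero y hy

end CentralizerOrthogonal

/-- Let `g` be a semisimple Lie algebra with an sl₂-triple `(e,h,f)`
and grading `g = ⊕ g_j` by `ad h` eigenvalues.  For `E ∈ g_j` with `j ≥ 0`, define the
skew form `ω` on `g_1` by `ω(a,b) = (f | [a,b])`.  Then the centralizer of `E` in `g_1`
is coisotropic with respect to `ω` if and only if the map
`(ad E) ∘ (ad f)⁻¹ ∘ (ad E)` restricted to `g_{-j-1}` is zero, where `(ad f)⁻¹` is a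
chosen right inverse `φ` of `ad f` mapping `g_{-1}` into `g_1`. -/
theorem coisotropic_iff_adE_adfinv_adE_eq_zero
    {F : Type*} [Field F] [IsAlgClosed F] [CharZero F]
    {g : Type*} [LieRing g] [LieAlgebra F g] [Module.Finite F g]
    [LieAlgebra.IsSemisimple F g]
    (B : LinearMap.BilinForm F g)
    (hB_nondeg : B.Nondegenerate)
    (hB_symm : ∀ a b : g, B a b = B b a)
    (hB_inv : ∀ a b c : g, B ⁅a, b⁆ c = B a ⁅b, c⁆)
    (e h f : g)
    (hhe : ⁅h, e⁆ = 2 • e) (hhf : ⁅h, f⁆ = -(2 • f)) (hef : ⁅e, f⁆ = h)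
    (gj : ℤ → Submodule F g)
    (hgj : ∀ n : ℤ, gj n = Module.End.eigenspace ((LieAlgebra.ad F g) h) (n : F))
    (j : ℤ) (hj : 0 ≤ j) (E : g) (hE : E ∈ gj j)
    -- ω is a symplectic (non-degenerate skew) form on g_1
    (hω_nondeg : ∀ x ∈ gj 1, (∀ y ∈ gj 1, B f ⁅x, y⁆ = 0) → x = 0)
    -- φ : a chosen right inverse of ad f, mapping g_{-1} into g_1
    (φ : g →ₗ[F] g)
    (hφ : ∀ y ∈ gj (-1), φ y ∈ gj 1 ∧ ⁅f, φ y⁆ = y) :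
    -- coisotropy of the centralizer of E in g_1 with respect to ω
    (∀ x ∈ gj 1, (∀ z ∈ gj 1, ⁅E, z⁆ = 0 → B f ⁅x, z⁆ = 0) → ⁅E, x⁆ = 0)
      ↔ (∀ x ∈ gj (-j - 1), ⁅E, φ ⁅E, x⁆⁆ = 0) := by
  obtain rfl : gj = fun n : ℤ ↦ (LieAlgebra.ad F g h).eigenspace (n : F) := funext hgj
  have hss := isSemisimple_ad_of_sl2_relations (F := F) hhe hhf hef
  simpa using coisotropic_iff_adE_adfinv_adE_eq_zero_general hB_nondeg hB_inv hss hE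
    (b := 1) (φ := φ) (by simpa using hω_nondeg) (by simpa using hφ)
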